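/- For every K > 0 there exist constants C > 0 and κ > 0 such that for every real a ≥ 0, ∑_{p=0}^∞ K^p a^p p^{3p/4} / p! ≤ C · exp(κ a⁴), where the p = 0 term of the series is interpreted as 1. -/

import Mathlib

theorem term_bound (K a : ℝ) (hK : 0 < K) (ha : 0 ≤ a) (p : ℕ) :
    K ^ p * a ^ p * (p : ℝ) ^ (3 * (p : ℝ) / 4) / (p.factorial : ℝ) ≤
      Real.exp ((2 * K * Real.exp 1) ^ 4 / 4 * a ^ 4) * (1 / 2) ^ p := by
  rcases Nat.eq_zero_or_pos p with rfl | hp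
  · simp only [pow_zero, Nat.cast_zero, mul_zero, zero_div, Real.rpow_zero, Nat.factorial_zero,
      Nat.cast_one, mul_one, div_one]
    exact Real.one_le_exp (by positivity)
  have hp' : (0 : ℝ) < p := by exact_mod_cast hp
  obtain ⟨q, hq, hq4, hq3⟩ : ∃ q : ℝ, 0 < q ∧ q ^ 4 = p ∧
      (p : ℝ) ^ (3 * (p : ℝ) / 4) = (q ^ 3) ^ p := by
    refine ⟨(p : ℝ) ^ (1 / 4 : ℝ), by positivity, ?_, ?_⟩
    · rw [← Real.rpow_natCast, ← Real.rpow_mul hp'.le]; norm_num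
    · rw [← pow_mul, ← Real.rpow_natCast, ← Real.rpow_mul hp'.le]
      congr 1; push_cast; ring
  have hf : (p : ℝ) ^ p ≤ Real.exp 1 ^ p * p.factorial := by
    have h := Real.pow_div_factorial_le_exp (p : ℝ) hp'.le p
    rw [div_le_iff₀ (by positivity)] at h
    rwa [← Real.exp_nat_mul, mul_one]
  set e := Real.exp 1 with he
  have hepos : 0 < e := Real.exp_pos 1
  set y := 2 * K * e * a / q with hy
  have hy0 : 0 ≤ y := by positivity
  have hy1 : y ≤ Real.exp (y ^ 4 / 4) := by
    have := Real.add_one_le_exp (y ^ 4 / 4)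
    nlinarith [sq_nonneg (y ^ 2 - 1), sq_nonneg (y - 1)]
  have hy2 : y ^ p ≤ Real.exp ((2 * K * e) ^ 4 / 4 * a ^ 4) := by
    calc y ^ p ≤ Real.exp (y ^ 4 / 4) ^ p := pow_le_pow_left₀ hy0 hy1 p
      _ = _ := by
        rw [← Real.exp_nat_mul, ← hq4, hy]
        congr 1
        field_simp
  rw [hq3]
  refine le_trans ?_ (mul_le_mul_of_nonneg_right hy2 (by positivity))
  rw [div_le_iff₀ (by positivity), ← mul_pow, ← mul_pow, ← mul_pow]
  have h1 : K * a * q ^ 3 = (y * (1 / 2)) / e * p := by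
    rw [← hq4, hy]; field_simp
  rw [h1, mul_pow, div_pow, div_mul_eq_mul_div, div_le_iff₀ (by positivity), mul_assoc]
  refine mul_le_mul_of_nonneg_left ?_ (by positivity)
  linarith

/-- For every `K > 0` there are `C, κ > 0` such that for all `a ≥ 0`,
`∑_{p=0}^∞ K^p a^p p^{3p/4} / p! ≤ C exp(κ a⁴)` (with the `p = 0` term equal to `1`). -/
theorem statement7 (K : ℝ) (hK : 0 < K) :
    ∃ C : ℝ, 0 < C ∧ ∃ κ : ℝ, 0 < κ ∧ ∀ a : ℝ, 0 ≤ a →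
      Summable (fun p : ℕ =>
        K ^ p * a ^ p * (p : ℝ) ^ (3 * (p : ℝ) / 4) / (p.factorial : ℝ)) ∧
      ∑' p : ℕ, K ^ p * a ^ p * (p : ℝ) ^ (3 * (p : ℝ) / 4) / (p.factorial : ℝ) ≤
        C * Real.exp (κ * a ^ 4) := by
  refine ⟨2, by norm_num, (2 * K * Real.exp 1) ^ 4 / 4, by positivity, fun a ha => ?_⟩
  have hg := hasSum_geometric_two.mul_left (Real.exp ((2 * K * Real.exp 1) ^ 4 / 4 * a ^ 4))
  have hs := Summable.of_nonneg_of_le (fun p : ℕ => by positivity)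
    (term_bound K a hK ha) hg.summable
  refine ⟨hs, ?_⟩
  rw [mul_comm 2, ← hg.tsum_eq]
  exact hs.tsum_le_tsum (term_bound K a hK ha) hg.summable
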